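/- arXiv:1706.10200 — 2 statements merged into one kernel-verified Lean document; each statement's English description precedes it below -/
import Mathlib

section
/- For every n ≥ 2 and every k ≥ 2, the center sponsored spanning star S_n is a k-local Nash equilibrium of the k-local degree price network creation game (degkNCG): no agent has a cost-decreasing deviation in which every newly bought edge goes to a node at distance at most k in the current graph. -/
/-!
The inequality between the two costs holds node by node. In the star, the cost of an agent `u` is at
most `∑ w, starDist u w`: leaves have degree-price `0`, and two distinct leaves are at distance `2`
through the center. After a deviation of `u` to `t`, every other node `w` contributes at least
`starDist u w`, counting both its distance and, if it is bought, its price. The only interesting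
case is that of two distinct leaves: if `w ∈ t`, then `w` is adjacent to both `u` and the center, so
its price is at least `1` and its distance at least `1`; if `w ∉ t`, then `w` is not adjacent to
`u`, so its distance is at least `2`. The argument applies to all deviations, local or not.
-/

/-!
Degree price network creation games (degNCG / degkNCG / degAOG / degkAOG).

A strategy vector assigns to each agent `u` a finite set `st u` of nodes to
which `u` buys an edge.  The induced graph has an edge `{u,v}` iff `v ∈ st u`
or `u ∈ st v`.  The cost of agent `u` is the sum of `deg v - 1` over all `v`
to which `u` bought an edge, plus the sum of (extended, i.e. `⊤` when
unreachable) graph distances from `u` to all nodes.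
-/

/-- A strategy vector: each agent picks the set of nodes it buys edges to. -/
abbrev Strategy (V : Type) := V → Finset V

variable {V : Type} [Fintype V] [DecidableEq V]

/-- The network induced by a strategy vector: `{u,v}` is an edge iff
`v ∈ st u` or `u ∈ st v`. -/
def netG (st : Strategy V) : SimpleGraph V :=
  SimpleGraph.fromRel (fun u v => v ∈ st u)

/-- The degree of a node in the induced network. -/
noncomputable def deg (st : Strategy V) (v : V) : ℕ :=
  letI : DecidableRel (netG st).Adj := Classical.decRel _
  (netG st).degree v

/-- The cost of agent `u`: degree-prices of the bought edges plus the sum of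
the distances to all nodes (`⊤` if some node is unreachable). -/
noncomputable def cost (st : Strategy V) (u : V) : ℕ∞ :=
  ((∑ v ∈ st u, (deg st v - 1) : ℕ) : ℕ∞) + ∑ w, (netG st).edist u w

/-- A strategy vector is valid if nobody buys a self-loop and every edge has
exactly one owner. -/
def Valid (st : Strategy V) : Prop :=
  (∀ u, u ∉ st u) ∧ (∀ u v, v ∈ st u → u ∉ st v)

/-- Pure Nash equilibrium of the degNCG: no agent can strictly decrease her
cost by unilaterally switching to any other strategy. -/
def IsNE (st : Strategy V) : Prop :=
  ∀ (u : V) (t : Finset V), u ∉ t →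
    cost st u ≤ cost (Function.update st u t) u

/-- `k`-local Nash equilibrium of the degkNCG: no agent can strictly decrease
her cost by a deviation in which every newly bought edge goes to a node at
distance at most `k` in the current graph. -/
def IskNE (k : ℕ) (st : Strategy V) : Prop :=
  ∀ (u : V) (t : Finset V), u ∉ t →
    (∀ v ∈ t \ st u, (netG st).edist u v ≤ k) →
    cost st u ≤ cost (Function.update st u t) u

/-- Equilibrium of the add-only game degAOG: no agent can strictly decrease
her cost by adding edges (deviations are supersets of the current strategy). -/
def IsAOEq (st : Strategy V) : Prop :=
  ∀ (u : V) (t : Finset V), u ∉ t → st u ⊆ t →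
    cost st u ≤ cost (Function.update st u t) u

/-- Equilibrium of the `k`-local add-only game degkAOG. -/
def IskAOEq (k : ℕ) (st : Strategy V) : Prop :=
  ∀ (u : V) (t : Finset V), u ∉ t → st u ⊆ t →
    (∀ v ∈ t \ st u, (netG st).edist u v ≤ k) →
    cost st u ≤ cost (Function.update st u t) u

/-- The social cost: the sum of all agents' costs. -/
noncomputable def social (st : Strategy V) : ℕ∞ :=
  ∑ u, cost st u

/-- The center sponsored spanning star on `n + 2` nodes: agent `0` buys an
edge to every other agent, everybody else buys nothing. -/
def starStrat (n : ℕ) : Strategy (Fin (n + 2)) := fun u =>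
  if u = 0 then ({0} : Finset (Fin (n + 2)))ᶜ else ∅

/-- The distance between `u` and `w` in the star with center `0`. -/
def starDist (n : ℕ) (u w : Fin (n + 2)) : ℕ :=
  if w = u then 0 else if w = 0 ∨ u = 0 then 1 else 2

lemma netG_adj {V : Type} (st : Strategy V) (u v : V) :
    (netG st).Adj u v ↔ u ≠ v ∧ (v ∈ st u ∨ u ∈ st v) := by
  simp [netG, SimpleGraph.fromRel_adj]

lemma mem_starStrat (n : ℕ) (u v : Fin (n + 2)) :
    v ∈ starStrat n u ↔ u = 0 ∧ v ≠ 0 := by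
  unfold starStrat
  split_ifs with h <;> simp [h]

lemma star_adj (n : ℕ) (u v : Fin (n + 2)) :
    (netG (starStrat n)).Adj u v ↔ u ≠ v ∧ (u = 0 ∨ v = 0) := by
  rw [netG_adj, mem_starStrat, mem_starStrat]
  grind

lemma star_deg_leaf (n : ℕ) (v : Fin (n + 2)) (hv : v ≠ 0) :
    deg (starStrat n) v ≤ 1 := by
  classical
  unfold deg
  rw [← SimpleGraph.card_neighborFinset_eq_degree]
  refine (Finset.card_le_card (t := {0}) ?_).trans (by simp)
  intro w hw
  rw [SimpleGraph.mem_neighborFinset, star_adj] at hw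
  simpa using hw.2.resolve_left hv

lemma star_edist_le (n : ℕ) (u w : Fin (n + 2)) :
    (netG (starStrat n)).edist u w ≤ starDist n u w := by
  unfold starDist
  split_ifs with h1 h2
  · simp [h1]
  · have : (netG (starStrat n)).Adj u w := by rw [star_adj]; grind
    simp [SimpleGraph.edist_eq_one_iff_adj.2 this]
  · have ha : (netG (starStrat n)).Adj u 0 := by rw [star_adj]; grind
    have hb : (netG (starStrat n)).Adj 0 w := by rw [star_adj]; grind
    refine (SimpleGraph.edist_triangle (v := 0)).trans ?_
    rw [SimpleGraph.edist_eq_one_iff_adj.2 ha, SimpleGraph.edist_eq_one_iff_adj.2 hb]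
    norm_num

lemma star_cost_le (n : ℕ) (u : Fin (n + 2)) :
    cost (starStrat n) u ≤ ∑ w, (starDist n u w : ℕ∞) := by
  have h0 : ∑ v ∈ starStrat n u, (deg (starStrat n) v - 1) = 0 := by
    refine Finset.sum_eq_zero fun v hv => ?_
    have := star_deg_leaf n v ((mem_starStrat n u v).1 hv).2
    omega
  unfold cost
  rw [h0, Nat.cast_zero, zero_add]
  exact Finset.sum_le_sum fun w _ => star_edist_le n u w

lemma two_le_deg {V : Type} [Fintype V] (st : Strategy V) {v a b : V} (hab : a ≠ b)
    (ha : (netG st).Adj v a) (hb : (netG st).Adj v b) : 2 ≤ deg st v := by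
  classical
  unfold deg
  rw [← SimpleGraph.card_neighborFinset_eq_degree, ← Finset.card_pair hab]
  refine Finset.card_le_card fun w hw => ?_
  rw [SimpleGraph.mem_neighborFinset]
  rcases Finset.mem_insert.1 hw with rfl | hw
  · exact ha
  · rwa [Finset.mem_singleton.1 hw]

lemma one_le_edist {V : Type} (G : SimpleGraph V) {u w : V} (h : u ≠ w) :
    1 ≤ G.edist u w :=
  Order.one_le_iff_pos.2 (SimpleGraph.edist_pos_of_ne h)

lemma two_le_edist {V : Type} (G : SimpleGraph V) {u w : V} (h : u ≠ w) (ha : ¬ G.Adj u w) :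
    2 ≤ G.edist u w := by
  have h1 : 1 < G.edist u w :=
    lt_of_le_of_ne (one_le_edist G h) fun e => ha (SimpleGraph.edist_eq_one_iff_adj.1 e.symm)
  simpa [one_add_one_eq_two] using Order.add_one_le_of_lt h1

/-- After `u` deviates to `t`, the price plus the distance that `u` pays for `w` is at least the
distance from `u` to `w` in the star. -/
lemma starDist_le (n : ℕ) (u w : Fin (n + 2)) (t : Finset (Fin (n + 2))) :
    (starDist n u w : ℕ∞) ≤
      ((if w ∈ t then deg (Function.update (starStrat n) u t) w - 1 else 0 : ℕ) : ℕ∞)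
        + (netG (Function.update (starStrat n) u t)).edist u w := by
  set st := Function.update (starStrat n) u t with hst
  have hu : st u = t := by simp [hst]
  have hne : ∀ v, v ≠ u → st v = starStrat n v := fun v hv => by simp [hst, hv]
  unfold starDist
  split_ifs with h1 h h2 h3 h3 h3
  · simp
  · simp
  · exact le_add_left (by simpa using one_le_edist (netG st) (Ne.symm h1))
  · exact le_add_left (by simpa using one_le_edist (netG st) (Ne.symm h1))
  · push Not at h2
    have ha : (netG st).Adj w u := by
      rw [netG_adj, hu]
      exact ⟨h1, Or.inr h3⟩
    have hb : (netG st).Adj w 0 := by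
      rw [netG_adj, hne 0 h2.2.symm, mem_starStrat]
      exact ⟨h2.1, Or.inr ⟨rfl, h2.1⟩⟩
    have hd : 1 ≤ deg st w - 1 := by
      have := two_le_deg st h2.2 ha hb
      omega
    have := add_le_add (Nat.cast_le (α := ℕ∞).2 hd) (one_le_edist (netG st) (Ne.symm h1))
    simpa [one_add_one_eq_two] using this
  · push Not at h2
    have ha : ¬ (netG st).Adj u w := by
      rw [netG_adj, hu, hne w h1, mem_starStrat]
      grind
    exact le_add_left (by simpa using two_le_edist (netG st) (Ne.symm h1) ha)

/-- For every `n ≥ 2` (here: `n + 2` nodes) and every `k ≥ 2`,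
the center sponsored spanning star is a `k`-local Nash equilibrium of the
degkNCG. -/
theorem star_is_kNE (n k : ℕ) (hk : 2 ≤ k) : IskNE k (starStrat n) := by
  intro u t _ _
  refine (star_cost_le n u).trans ?_
  refine (Finset.sum_le_sum fun w _ => starDist_le n u w t).trans (le_of_eq ?_)
  rw [Finset.sum_add_distrib, ← Nat.cast_sum, Finset.sum_ite_mem, Finset.univ_inter]
  simp [cost]
end

section
/- Let s be a Nash equilibrium of the degNCG (or, more generally, a kNE of the degkNCG for some k ≥ 2) on n nodes whose induced graph G is connected with diameter D. Then for every agent u, the total cost of the non-bridge edges bought by u satisfies Σ_{v ∈ S_u, {u,v} not a bridge of G} (deg_G(v) − 1) < 2nD, where a bridge is an edge whose removal disconnects G. -/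
variable {V : Type} [Fintype V] [DecidableEq V]

section Distances

variable {α : Type*} {G : SimpleGraph α} {u v w : α}

/-- A shortest path from `a` to a node that is closer to `a` than to `u` avoids `u`, and hence
survives the deletion of an edge at `u`. -/
lemma exists_walk_deleteEdge (hc : G.Connected) (w : α) {a : α}
    (h : G.dist a w < G.dist u w) :
    ∃ p : (G.deleteEdges {s(u, v)}).Walk a w, p.length = G.dist a w := by
  obtain ⟨p, hp⟩ := hc.exists_walk_length_eq_dist a w
  rw [← hp] at h ⊢
  clear hp
  induction p with
  | nil => exact ⟨.nil, rfl⟩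
  | @cons a b w hab p ih =>
    rw [SimpleGraph.Walk.length_cons] at h
    obtain ⟨q, hq⟩ := ih (by omega)
    have hau : a ≠ u := by
      rintro rfl
      have := SimpleGraph.dist_le (SimpleGraph.Walk.cons hab p)
      simp only [SimpleGraph.Walk.length_cons] at this
      omega
    have hbu : b ≠ u := by
      rintro rfl
      have := SimpleGraph.dist_le p
      omega
    have hab' : (G.deleteEdges {s(u, v)}).Adj a b := by
      simp only [SimpleGraph.deleteEdges_adj, Set.mem_singleton_iff, Sym2.eq_iff]
      grind
    exact ⟨.cons hab' q, by simp [hq]⟩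

lemma dist_deleteEdge_le (hc : G.Connected) {a : α} (h : G.dist a w + 1 = G.dist u w) :
    (G.deleteEdges {s(u, v)}).dist a w ≤ G.dist a w := by
  obtain ⟨p, hp⟩ := exists_walk_deleteEdge (u := u) (v := v) hc w (a := a) (by omega)
  exact hp ▸ SimpleGraph.dist_le p

/-- The first hop of a shortest path exists. -/
lemma exists_first_hop (hc : G.Connected) (hw : w ≠ u) :
    ∃ a, G.Adj u a ∧ G.dist a w + 1 = G.dist u w := by
  obtain ⟨p, hp⟩ := hc.exists_walk_length_eq_dist u w
  cases p with
  | nil => exact absurd rfl hw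
  | @cons _ a _ hua p =>
    refine ⟨a, hua, ?_⟩
    simp only [SimpleGraph.Walk.length_cons] at hp
    have h1 := SimpleGraph.dist_le p
    have h2 := hc.dist_triangle (u := u) (v := a) (w := w)
    have h3 := SimpleGraph.dist_eq_one_iff_adj.2 hua
    omega

lemma dist_deleteEdge_le_of_ne (hc : G.Connected) (hc' : (G.deleteEdges {s(u, v)}).Connected)
    {a : α} (hua : G.Adj u a) (h : G.dist a w + 1 = G.dist u w) (hav : a ≠ v) :
    (G.deleteEdges {s(u, v)}).dist u w ≤ G.dist u w := by
  have h1 := dist_deleteEdge_le (v := v) hc h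
  have h2 := hc'.dist_triangle (u := u) (v := a) (w := w)
  have h3 : (G.deleteEdges {s(u, v)}).dist u a = 1 := by
    rw [SimpleGraph.dist_eq_one_iff_adj]
    simp only [SimpleGraph.deleteEdges_adj, Set.mem_singleton_iff, Sym2.eq_iff]
    grind
  omega

/-- If `f` is a choice of first hops from `u`, then deleting the non-bridge `{u,v}` increases the
distance from `u` to a node with first hop `v` by at most `2D - 1`. -/
lemma dist_deleteEdge_le_of_eq (hc : G.Connected) (hc' : (G.deleteEdges {s(u, v)}).Connected)
    {D : ℕ} (hD : ∀ a b, G.dist a b ≤ D) (huv : G.Adj u v) {f : α → α}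
    (hf : ∀ w, w ≠ u → G.Adj u (f w) ∧ G.dist (f w) w + 1 = G.dist u w)
    (hw : w ≠ u) (hwv : f w = v) :
    (G.deleteEdges {s(u, v)}).dist u w + 1 ≤ G.dist u w + 2 * D := by
  have hfv : f v = v := by
    have h := (hf v huv.ne').2
    rw [SimpleGraph.dist_eq_one_iff_adj.2 huv] at h
    exact hc.dist_eq_zero_iff.1 (by omega)
  -- A walk from `v` to `u` avoiding the deleted edge leaves the set of nodes with first hop `v`.
  obtain ⟨p⟩ := hc' v u
  obtain ⟨⟨⟨x, y⟩, hxy⟩, -, hx, hy⟩ :=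
    p.exists_boundary_dart {z | z ≠ u ∧ f z = v} ⟨huv.ne', hfv⟩ (by simp)
  simp only [Set.mem_ofPred_eq] at hx hy
  have huy : (G.deleteEdges {s(u, v)}).dist u y ≤ G.dist u y := by
    by_cases hyu : y = u
    · simp [hyu]
    · exact dist_deleteEdge_le_of_ne hc hc' (hf y hyu).1 (hf y hyu).2 fun h ↦ hy ⟨hyu, h⟩
  have hfx := (hf x hx.1).2
  have hfw := (hf w hw).2
  rw [hx.2] at hfx
  rw [hwv] at hfw
  have h1 := dist_deleteEdge_le (v := v) hc hfx
  have h2 := dist_deleteEdge_le (v := v) hc hfw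
  have h3 := SimpleGraph.dist_eq_one_iff_adj.2 hxy.symm
  have h4 := hc'.dist_triangle (u := u) (v := y) (w := w)
  have h5 := hc'.dist_triangle (u := y) (v := x) (w := w)
  have h6 := hc'.dist_triangle (u := x) (v := v) (w := w)
  rw [SimpleGraph.dist_comm (u := x) (v := v)] at h6
  have h7 := hD u x
  have h8 := hD u y
  simp only at h3
  omega

end Distances

lemma cost_eq_of_connected {W : Type} [Fintype W] (st : Strategy W) (hc : (netG st).Connected)
    (u : W) :
    cost st u = ((∑ v ∈ st u, (deg st v - 1) + ∑ w, (netG st).dist u w : ℕ) : ℕ∞) := by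
  simp only [cost, Nat.cast_add, Nat.cast_sum, fun w ↦ ((hc u w).coe_dist_eq_edist).symm]

/-- Since every edge has exactly one owner, dropping `v` from the strategy of `u` removes the edge
`{u,v}` from the network. -/
lemma netG_update_erase {W : Type} [DecidableEq W] (st : Strategy W) (hv : Valid st) {u v : W}
    (huv : v ∈ st u) :
    netG (Function.update st u ((st u).erase v)) = (netG st).deleteEdges {s(u, v)} := by
  have h1 := hv.1
  have h2 := hv.2 u v huv
  ext x y
  simp only [netG, SimpleGraph.deleteEdges_adj, SimpleGraph.fromRel_adj, Set.mem_singleton_iff,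
    Sym2.eq_iff, Function.update_apply]
  grind

lemma deg_mono {W : Type} [Fintype W] {st st' : Strategy W} (h : netG st' ≤ netG st) (v : W) :
    deg st' v ≤ deg st v := by
  unfold deg
  classical
  exact SimpleGraph.degree_le_of_le h

/-- If deleting the bought edge `{u,v}` keeps the network connected and is not an improvement, the
price of the edge is at most the increase of the distance cost. -/
lemma price_add_dist_le (st : Strategy V) (hv : Valid st) (hc : (netG st).Connected)
    {u v : V} (huv : v ∈ st u) (hc' : ((netG st).deleteEdges {s(u, v)}).Connected)
    (hne : cost st u ≤ cost (Function.update st u ((st u).erase v)) u) :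
    (deg st v - 1) + ∑ w, (netG st).dist u w ≤
      ∑ w, ((netG st).deleteEdges {s(u, v)}).dist u w := by
  have hG := netG_update_erase st hv huv
  rw [cost_eq_of_connected st hc, cost_eq_of_connected _ (hG ▸ hc'), Nat.cast_le, hG,
    Function.update_self, ← Finset.add_sum_erase _ _ huv] at hne
  have : ∑ w ∈ (st u).erase v, (deg (Function.update st u ((st u).erase v)) w - 1) ≤
      ∑ w ∈ (st u).erase v, (deg st w - 1) :=
    Finset.sum_le_sum fun w _ ↦ Nat.sub_le_sub_right
      (deg_mono (hG ▸ SimpleGraph.deleteEdges_le _) w) 1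
  omega

open scoped Classical in
/-- In a Nash equilibrium of the degNCG (or a kNE of the degkNCG,
`k ≥ 2`) on `n` nodes whose induced graph is connected with diameter `D`, the
total cost of the non-bridge edges bought by any agent `u` is less than
`2 n D`. -/
theorem nonbridge_cost_lt (n : ℕ) (hn : 2 ≤ n) (st : Strategy (Fin n))
    (hv : Valid st) (hne : IsNE st ∨ ∃ k, 2 ≤ k ∧ IskNE k st)
    (hc : (netG st).Connected) (u : Fin n) :
    ∑ v ∈ (st u).filter (fun v => ¬ (netG st).IsBridge s(u, v)),
        (deg st v - 1) <
      2 * n * (netG st).diam := by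
  have : NeZero n := ⟨by omega⟩
  have : Nontrivial (Fin n) := Fin.nontrivial_iff_two_le.2 hn
  set D := (netG st).diam with hDdef
  have hD0 : D ≠ 0 := SimpleGraph.connected_iff_diam_ne_zero.1 hc
  have hD : ∀ a b, (netG st).dist a b ≤ D := fun a b ↦
    SimpleGraph.dist_le_diam (SimpleGraph.connected_iff_ediam_ne_top.1 hc)
  have hdev : ∀ t : Finset (Fin n), t ⊆ st u → cost st u ≤ cost (Function.update st u t) u := by
    intro t ht
    have hut : u ∉ t := fun h ↦ hv.1 u (ht h)
    rcases hne with h | ⟨k, -, h⟩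
    · exact h u t hut
    · exact h u t hut (by simp [Finset.sdiff_eq_empty_iff_subset.2 ht])
  have hex : ∀ w, ∃ a, w ≠ u →
      (netG st).Adj u a ∧ (netG st).dist a w + 1 = (netG st).dist u w := fun w ↦ by
    by_cases hw : w = u
    · exact ⟨u, fun h ↦ absurd hw h⟩
    · obtain ⟨a, ha⟩ := exists_first_hop hc hw
      exact ⟨a, fun _ ↦ ha⟩
  choose f hf using hex
  let B : Fin n → Finset (Fin n) := fun v ↦ Finset.univ.filter fun w ↦ w ≠ u ∧ f w = v
  have key : ∀ v ∈ (st u).filter (fun v => ¬ (netG st).IsBridge s(u, v)),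
      deg st v - 1 ≤ (B v).card * (2 * D - 1) := by
    intro v hvm
    obtain ⟨hvu, hb⟩ := Finset.mem_filter.1 hvm
    have hc' := hc.connected_delete_edge_of_not_isBridge hb
    have huv : (netG st).Adj u v := by
      simp only [netG, SimpleGraph.fromRel_adj]
      exact ⟨fun h ↦ hv.1 u (by rw [← h] at hvu; exact hvu), .inl hvu⟩
    have h1 := price_add_dist_le st hv hc hvu hc' (hdev _ (Finset.erase_subset v _))
    have h2 : ∑ w, ((netG st).deleteEdges {s(u, v)}).dist u w ≤
        ∑ w, ((netG st).dist u w + if w ≠ u ∧ f w = v then 2 * D - 1 else 0) := by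
      refine Finset.sum_le_sum fun w _ ↦ ?_
      split_ifs with h
      · have := dist_deleteEdge_le_of_eq hc hc' hD huv hf h.1 h.2
        omega
      · by_cases hw : w = u
        · simp [hw]
        · exact dist_deleteEdge_le_of_ne hc hc' (hf w hw).1 (hf w hw).2 fun e ↦ h ⟨hw, e⟩
    rw [Finset.sum_add_distrib, ← Finset.sum_filter, Finset.sum_const, smul_eq_mul] at h2
    change _ ≤ _ + (B v).card * (2 * D - 1) at h2
    omega
  have hB : ∑ v ∈ (st u).filter (fun v => ¬ (netG st).IsBridge s(u, v)), (B v).card ≤ n := by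
    rw [← Finset.card_biUnion]
    · exact (Finset.card_le_univ _).trans_eq (Fintype.card_fin n)
    · intro a _ b _ hab
      refine Finset.disjoint_left.2 fun w hwa hwb ↦ hab ?_
      rw [← (Finset.mem_filter.1 hwa).2.2, (Finset.mem_filter.1 hwb).2.2]
  calc _ ≤ ∑ v ∈ (st u).filter (fun v => ¬ (netG st).IsBridge s(u, v)),
        (B v).card * (2 * D - 1) := Finset.sum_le_sum key
    _ ≤ n * (2 * D - 1) := by rw [← Finset.sum_mul]; exact Nat.mul_le_mul_right _ hB
    _ < n * (2 * D) := Nat.mul_lt_mul_of_pos_left (by omega) (by omega)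
    _ = 2 * n * D := by ring
end
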